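/- arXiv:0709.0213 — 2 statements merged into one kernel-verified Lean document; each statement's English description precedes it below -/
import Mathlib

section
/- (van der Corput decay for arc-length measure on a curve with nonvanishing curvature) Let γ : [0,l] → ℝ² be a C² arclength-parametrized curve with |x'(t)y''(t) - x''(t)y'(t)| ≥ c > 0 for all t, where γ = (x,y). Then the Fourier transform ν̂(p) = (1/2π)∫₀^l e^{-i⟨p,γ(t)⟩} dt of the measure δ_Γ tends to 0 as |p| → ∞. -/
open MeasureTheory Real Filter Set

lemma fd_key (l : ℝ) (hl : 0 < l) (f f1 f2 : ℝ → ℝ) (M r η : ℝ) (hr : 0 < r) (hη : 0 < η)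
    (hf : ContinuousOn f (Icc 0 l)) (hf1 : ContinuousOn f1 (Icc 0 l))
    (hf2 : ContinuousOn f2 (Icc 0 l))
    (hd : ∀ t ∈ Ioo 0 l, HasDerivAt f (f1 t) t)
    (hd1 : ∀ t ∈ Ioo 0 l, HasDerivAt f1 (f2 t) t)
    (hM : ∀ t ∈ Icc 0 l, |f2 t| ≤ M) (hrη : r * η ^ 4 = 1) :
    ‖∫ t in (0:ℝ)..l, Complex.exp (-(Complex.I * ((r * f t : ℝ) : ℂ)))‖ ≤
      2 * η ^ 3 + M * l * η ^ 2 + ∫ t in (0:ℝ)..l, η ^ 2 / (f1 t ^ 2 + η ^ 2) := by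
  have hu : uIcc 0 l = Icc 0 l := uIcc_of_le hl.le
  have hpos : ∀ t, 0 < f1 t ^ 2 + η ^ 2 := fun t => by positivity
  set E : ℝ → ℂ := fun t => Complex.exp (-(Complex.I * ((r * f t : ℝ) : ℂ))) with hE
  have hEn : ∀ t, ‖E t‖ = 1 := by
    intro t
    have : E t = Complex.exp (((-(r * f t) : ℝ) : ℂ) * Complex.I) := by
      simp only [hE]; congr 1; push_cast; ring
    rw [this, Complex.norm_exp_ofReal_mul_I]
  have hEc : ContinuousOn E (Icc 0 l) := by
    simp only [hE]; fun_prop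
  set g : ℝ → ℝ := fun t => f1 t / (f1 t ^ 2 + η ^ 2) with hg
  set g' : ℝ → ℝ := fun t => f2 t * (η ^ 2 - f1 t ^ 2) / (f1 t ^ 2 + η ^ 2) ^ 2 with hg'
  set w : ℝ → ℝ := fun t => η ^ 2 / (f1 t ^ 2 + η ^ 2) with hw
  have hgc : ContinuousOn g (Icc 0 l) :=
    hf1.div (by fun_prop) (fun t _ => (hpos t).ne')
  have hgc' : ContinuousOn g' (Icc 0 l) :=
    ContinuousOn.div (by fun_prop) (by fun_prop) (fun t _ => (pow_pos (hpos t) 2).ne')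
  have hwc : ContinuousOn w (Icc 0 l) :=
    ContinuousOn.div (by fun_prop) (by fun_prop) (fun t _ => (hpos t).ne')
  have hgb : ∀ t, |g t| ≤ 1 / η := by
    intro t
    simp only [hg]
    rw [abs_div, abs_of_pos (hpos t), div_le_div_iff₀ (hpos t) hη]
    nlinarith [sq_nonneg (|f1 t| - η), sq_abs (f1 t), abs_nonneg (f1 t)]
  have hgb' : ∀ t ∈ Icc 0 l, |g' t| ≤ M / η ^ 2 := by
    intro t ht
    have hM0 : 0 ≤ M := (abs_nonneg _).trans (hM t ht)
    simp only [hg']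
    rw [abs_div, abs_mul, abs_of_pos (pow_pos (hpos t) 2)]
    have h1 : |η ^ 2 - f1 t ^ 2| ≤ f1 t ^ 2 + η ^ 2 := by
      rw [abs_le]; constructor <;> nlinarith [sq_nonneg (f1 t), sq_nonneg η]
    calc |f2 t| * |η ^ 2 - f1 t ^ 2| / (f1 t ^ 2 + η ^ 2) ^ 2
        ≤ M * (f1 t ^ 2 + η ^ 2) / (f1 t ^ 2 + η ^ 2) ^ 2 := by
          gcongr
          exact hM t ht
      _ = M / (f1 t ^ 2 + η ^ 2) := by
          field_simp [(hpos t).ne']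
      _ ≤ M / η ^ 2 := by
          gcongr
          nlinarith [sq_nonneg (f1 t)]
  -- fundamental theorem of calculus
  have hcGE : ContinuousOn (fun t => (g t : ℂ) * E t) (Icc 0 l) :=
    (Complex.continuous_ofReal.comp_continuousOn hgc).mul hEc
  have hcG'E : ContinuousOn (fun t => (g' t : ℂ) * E t) (Icc 0 l) :=
    (Complex.continuous_ofReal.comp_continuousOn hgc').mul hEc
  have hcwE : ContinuousOn (fun t => (w t : ℂ) * E t) (Icc 0 l) :=
    (Complex.continuous_ofReal.comp_continuousOn hwc).mul hEc
  have hcf1 : ContinuousOn (fun t => (f1 t : ℂ)) (Icc 0 l) :=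
    Complex.continuous_ofReal.comp_continuousOn hf1
  have hcmain : ContinuousOn (fun t => (f1 t : ℂ) * ((g t : ℂ) * E t)) (Icc 0 l) :=
    hcf1.mul hcGE
  have ii : ∀ {h : ℝ → ℂ}, ContinuousOn h (Icc 0 l) → IntervalIntegrable h volume 0 l := by
    intro h hh
    exact ContinuousOn.intervalIntegrable (by rwa [hu])
  have hder : ∀ t ∈ Ioo 0 l, HasDerivAt (fun t => (g t : ℂ) * E t)
      ((g' t : ℂ) * E t - Complex.I * r * ((f1 t : ℂ) * ((g t : ℂ) * E t))) t := by
    intro t ht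
    have h1 : HasDerivAt g (g' t) t := by
      have := (hd1 t ht).div (((hd1 t ht).pow 2).add_const (η ^ 2)) (hpos t).ne'
      refine this.congr_deriv ?_
      simp only [hg']
      congr 1
      simp
      ring
    have h2 : HasDerivAt E (E t * (-(Complex.I * ((r * f1 t : ℝ) : ℂ)))) t := by
      have := ((((hd t ht).const_mul r).ofReal_comp).const_mul Complex.I).neg.cexp
      exact this
    refine (h1.ofReal_comp.mul h2).congr_deriv ?_
    push_cast
    ring
  have hFTC := intervalIntegral.integral_eq_sub_of_hasDerivAt_of_le hl.le hcGE hder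
    (ii (hcG'E.sub (continuousOn_const.mul hcmain)))
  have hcm2 : ContinuousOn (fun t => Complex.I * r * ((f1 t : ℂ) * ((g t : ℂ) * E t)))
      (Icc 0 l) := continuousOn_const.mul hcmain
  rw [intervalIntegral.integral_sub (ii hcG'E) (ii hcm2),
    intervalIntegral.integral_const_mul] at hFTC
  have hsplit : ∫ t in (0:ℝ)..l, E t =
      (∫ t in (0:ℝ)..l, (f1 t : ℂ) * ((g t : ℂ) * E t)) + ∫ t in (0:ℝ)..l, (w t : ℂ) * E t := by
    rw [← intervalIntegral.integral_add (ii hcmain) (ii hcwE)]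
    congr 1
    funext t
    have : f1 t * g t + w t = 1 := by
      simp only [hg, hw]
      field_simp [(hpos t).ne']
    have h' : (f1 t : ℂ) * g t + w t = 1 := by exact_mod_cast this
    calc E t = ((f1 t : ℂ) * g t + w t) * E t := by rw [h', one_mul]
      _ = _ := by ring
  have hwb : ‖∫ t in (0:ℝ)..l, (w t : ℂ) * E t‖ ≤ ∫ t in (0:ℝ)..l, w t := by
    refine (intervalIntegral.norm_integral_le_integral_norm hl.le).trans (le_of_eq ?_)
    congr 1
    funext t
    rw [norm_mul, hEn, mul_one, Complex.norm_real, Real.norm_of_nonneg]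
    have := hpos t
    positivity
  have hg'i : ‖∫ t in (0:ℝ)..l, (g' t : ℂ) * E t‖ ≤ M / η ^ 2 * l := by
    have := intervalIntegral.norm_integral_le_of_norm_le_const (a := 0) (b := l)
      (f := fun t => (g' t : ℂ) * E t) (C := M / η ^ 2) (by
        intro t ht
        rw [uIoc_of_le hl.le] at ht
        rw [norm_mul, hEn, mul_one, Complex.norm_real]
        exact hgb' t ⟨ht.1.le, ht.2⟩)
    rwa [sub_zero, abs_of_pos hl] at this
  have hGE : ∀ t, ‖(g t : ℂ) * E t‖ ≤ 1 / η := by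
    intro t
    rw [norm_mul, hEn, mul_one, Complex.norm_real]
    exact hgb t
  have hmain : ‖∫ t in (0:ℝ)..l, (f1 t : ℂ) * ((g t : ℂ) * E t)‖ ≤
      2 * η ^ 3 + M * l * η ^ 2 := by
    have h3 : Complex.I * r * (∫ t in (0:ℝ)..l, (f1 t : ℂ) * ((g t : ℂ) * E t)) =
        (∫ t in (0:ℝ)..l, (g' t : ℂ) * E t) - ((g l : ℂ) * E l - (g 0 : ℂ) * E 0) := by
      rw [← hFTC]; ring
    have h4 := congrArg norm h3
    rw [norm_mul, norm_mul, Complex.norm_I, one_mul, Complex.norm_real,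
      Real.norm_of_nonneg hr.le] at h4
    have h5 : r * ‖∫ t in (0:ℝ)..l, (f1 t : ℂ) * ((g t : ℂ) * E t)‖ ≤
        M / η ^ 2 * l + (1 / η + 1 / η) := by
      rw [h4]
      exact (norm_sub_le _ _).trans (add_le_add hg'i
        ((norm_sub_le _ _).trans (add_le_add (hGE _) (hGE _))))
    have h6 := mul_le_mul_of_nonneg_left h5 (pow_pos hη 4).le
    rw [← mul_assoc, mul_comm _ r, hrη, one_mul] at h6
    refine h6.trans (le_of_eq ?_)
    field_simp
    ring
  rw [hsplit]
  exact (norm_add_le _ _).trans (add_le_add hmain hwb)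

/-- the zero set is null -/
lemma fd_null (l : ℝ) (f1 f2 : ℝ → ℝ)
    (hf1 : ContinuousOn f1 (Icc 0 l))
    (hd1 : ∀ t ∈ Icc 0 l, HasDerivWithinAt f1 (f2 t) (Icc 0 l) t)
    (h : ∀ t ∈ Icc 0 l, f1 t = 0 → f2 t ≠ 0) :
    volume {t | t ∈ Icc 0 l ∧ f1 t = 0} = 0 := by
  have : {t | t ∈ Icc 0 l ∧ f1 t = 0}.Finite := by
    by_contra hinf
    obtain ⟨a, ha, hacc⟩ := Set.Infinite.exists_accPt_of_subset_isCompact hinf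
      (isCompact_Icc (a := 0) (b := l)) (fun t ht => ht.1)
    rw [accPt_iff_frequently_nhdsNE] at hacc
    by_cases h0 : f1 a = 0
    · have := (hd1 a ha).eventually_ne (h a ha h0) (c := 0)
      rw [eventually_nhdsWithin_iff] at this
      apply hacc
      rw [eventually_nhdsWithin_iff]
      filter_upwards [this] with t ht h1 h2
      exact ht ⟨h2.1, h1⟩ h2.2
    · have := (hf1 a ha).eventually_ne h0
      rw [eventually_nhdsWithin_iff] at this
      apply hacc
      apply Filter.Eventually.filter_mono nhdsWithin_le_nhds
      filter_upwards [this] with t ht h2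
      exact ht h2.1 h2.2
  exact this.measure_zero _

/-- van der Corput decay: the Fourier transform of the arclength measure of a compact `C²`
plane curve with curvature bounded away from zero tends to `0` at infinity. -/
theorem fourier_decay_of_curved_arc
    (l : ℝ) (hl : 0 < l) (x y : ℝ → ℝ) (c : ℝ) (hc : 0 < c)
    (hx : ContDiffOn ℝ 2 x (Icc 0 l)) (hy : ContDiffOn ℝ 2 y (Icc 0 l))
    (harc : ∀ t ∈ Icc (0:ℝ) l,
      (derivWithin x (Icc 0 l) t) ^ 2 + (derivWithin y (Icc 0 l) t) ^ 2 = 1)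
    (hcurv : ∀ t ∈ Icc (0:ℝ) l,
      c ≤ |derivWithin x (Icc 0 l) t * derivWithin (derivWithin y (Icc 0 l)) (Icc 0 l) t
          - derivWithin (derivWithin x (Icc 0 l)) (Icc 0 l) t * derivWithin y (Icc 0 l) t|) :
    Tendsto (fun p : ℝ × ℝ =>
        (1 / (2 * π)) * ∫ t in (0:ℝ)..l,
          Complex.exp (-(Complex.I * ((p.1 * x t + p.2 * y t : ℝ) : ℂ))))
      (Bornology.cobounded (ℝ × ℝ)) (nhds 0) := by
  have hU : UniqueDiffOn ℝ (Icc 0 l) := uniqueDiffOn_Icc hl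
  have hx' : ContDiffOn ℝ 1 (derivWithin x (Icc 0 l)) (Icc 0 l) :=
    hx.derivWithin hU (by norm_num)
  have hy' : ContDiffOn ℝ 1 (derivWithin y (Icc 0 l)) (Icc 0 l) :=
    hy.derivWithin hU (by norm_num)
  have hx2 : ContinuousOn (derivWithin (derivWithin x (Icc 0 l)) (Icc 0 l)) (Icc 0 l) :=
    hx'.continuousOn_derivWithin hU le_rfl
  have hy2 : ContinuousOn (derivWithin (derivWithin y (Icc 0 l)) (Icc 0 l)) (Icc 0 l) :=
    hy'.continuousOn_derivWithin hU le_rfl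
  have dx : ∀ t ∈ Icc 0 l, HasDerivWithinAt x (derivWithin x (Icc 0 l) t) (Icc 0 l) t :=
    fun t ht => (hx.differentiableOn (by norm_num) t ht).hasDerivWithinAt
  have dy : ∀ t ∈ Icc 0 l, HasDerivWithinAt y (derivWithin y (Icc 0 l) t) (Icc 0 l) t :=
    fun t ht => (hy.differentiableOn (by norm_num) t ht).hasDerivWithinAt
  have dx1 : ∀ t ∈ Icc 0 l, HasDerivWithinAt (derivWithin x (Icc 0 l))
      (derivWithin (derivWithin x (Icc 0 l)) (Icc 0 l) t) (Icc 0 l) t :=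
    fun t ht => (hx'.differentiableOn (by norm_num) t ht).hasDerivWithinAt
  have dy1 : ∀ t ∈ Icc 0 l, HasDerivWithinAt (derivWithin y (Icc 0 l))
      (derivWithin (derivWithin y (Icc 0 l)) (Icc 0 l) t) (Icc 0 l) t :=
    fun t ht => (hy'.differentiableOn (by norm_num) t ht).hasDerivWithinAt
  have cx := hx.continuousOn
  have cy := hy.continuousOn
  have cx1 := hx'.continuousOn
  have cy1 := hy'.continuousOn
  generalize derivWithin (derivWithin x (Icc 0 l)) (Icc 0 l) = x2 at *
  generalize derivWithin (derivWithin y (Icc 0 l)) (Icc 0 l) = y2 at *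
  generalize derivWithin x (Icc 0 l) = x1 at *
  generalize derivWithin y (Icc 0 l) = y1 at *
  obtain ⟨A, hA⟩ := isCompact_Icc.exists_bound_of_continuousOn hx2
  obtain ⟨B, hB⟩ := isCompact_Icc.exists_bound_of_continuousOn hy2
  suffices H : Tendsto (fun p : ℝ × ℝ => ∫ t in (0:ℝ)..l,
          Complex.exp (-(Complex.I * ((p.1 * x t + p.2 * y t : ℝ) : ℂ))))
      (Bornology.cobounded (ℝ × ℝ)) (nhds 0) by
    simpa using H.const_mul (1 / (2 * (π : ℂ)))
  have hcg : (Bornology.cobounded (ℝ × ℝ)).IsCountablyGenerated := by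
    rw [← comap_norm_atTop]
    infer_instance
  apply tendsto_of_subseq_tendsto
  intro p hp
  have hpn : Tendsto (fun n => ‖p n‖) atTop atTop := tendsto_norm_atTop_iff_cobounded.2 hp
  have hmem : ∀ n, (‖p n‖⁻¹ • p n) ∈ Metric.closedBall (0 : ℝ × ℝ) 1 := by
    intro n
    rw [mem_closedBall_zero_iff, norm_smul, norm_inv, norm_norm]
    exact inv_mul_le_one
  obtain ⟨ω, -, ms, hms, hlim⟩ := (isCompact_closedBall (0 : ℝ × ℝ) 1).tendsto_subseq hmem
  refine ⟨ms, ?_⟩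
  have hqn : Tendsto (fun n => ‖p (ms n)‖) atTop atTop := hpn.comp hms.tendsto_atTop
  have hω : ‖ω‖ = 1 := by
    refine tendsto_nhds_unique hlim.norm (tendsto_const_nhds.congr' ?_)
    filter_upwards [hqn.eventually_gt_atTop 0] with n hn
    simp only [Function.comp, norm_smul, norm_inv, norm_norm]
    rw [inv_mul_cancel₀ hn.ne']
  set q : ℕ → ℝ × ℝ := fun n => ‖p (ms n)‖⁻¹ • p (ms n) with hq
  have hlim' : Tendsto q atTop (nhds ω) := hlim
  set η : ℕ → ℝ := fun n => (Real.sqrt (Real.sqrt ‖p (ms n)‖))⁻¹ with hη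
  have hη0 : Tendsto η atTop (nhds 0) :=
    tendsto_inv_atTop_zero.comp
      (Real.tendsto_sqrt_atTop.comp (Real.tendsto_sqrt_atTop.comp hqn))
  have hωx : Tendsto (fun n => (q n).1) atTop (nhds ω.1) := (continuous_fst.tendsto _).comp hlim'
  have hωy : Tendsto (fun n => (q n).2) atTop (nhds ω.2) := (continuous_snd.tendsto _).comp hlim'
  have hI : Tendsto (fun n => ∫ t in (0:ℝ)..l,
      η n ^ 2 / (((q n).1 * x1 t + (q n).2 * y1 t) ^ 2 + η n ^ 2)) atTop (nhds 0) := by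
    have hnull := fd_null l (fun t => ω.1 * x1 t + ω.2 * y1 t)
      (fun t => ω.1 * x2 t + ω.2 * y2 t) (by fun_prop)
      (fun t ht => ((dx1 t ht).const_mul _).add ((dy1 t ht).const_mul _)) (by
        intro t ht h1 h2
        have hk : x1 t * y2 t - x2 t * y1 t ≠ 0 := by
          intro h
          have := hcurv t ht
          rw [h, abs_zero] at this
          linarith
        have e1 : ω.1 = 0 := by
          apply (mul_eq_zero.1 (_ : ω.1 * (x1 t * y2 t - x2 t * y1 t) = 0)).resolve_right hk
          linear_combination y2 t * h1 - y1 t * h2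
        have e2 : ω.2 = 0 := by
          apply (mul_eq_zero.1 (_ : ω.2 * (x1 t * y2 t - x2 t * y1 t) = 0)).resolve_right hk
          linear_combination x1 t * h2 - x2 t * h1
        have : ω = 0 := Prod.ext e1 e2
        rw [this, norm_zero] at hω
        norm_num at hω)
    have hev : ∀ᵐ t ∂(volume : Measure ℝ),
        ¬ (t ∈ Icc 0 l ∧ ω.1 * x1 t + ω.2 * y1 t = 0) := by
      rw [ae_iff]
      simpa only [not_not] using hnull
    have hη1 : ∀ᶠ n in atTop, 0 < η n := by
      filter_upwards [hqn.eventually_gt_atTop 0] with n hn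
      simp only [hη]; positivity
    have := intervalIntegral.tendsto_integral_filter_of_dominated_convergence
      (μ := volume) (a := 0) (b := l) (l := atTop)
      (F := fun n t => η n ^ 2 / (((q n).1 * x1 t + (q n).2 * y1 t) ^ 2 + η n ^ 2))
      (f := fun _ => 0) (fun _ => (1 : ℝ)) ?_ ?_ ?_ ?_
    · simpa using this
    · filter_upwards [hη1] with n hn
      have : ContinuousOn (fun t => η n ^ 2 / (((q n).1 * x1 t + (q n).2 * y1 t) ^ 2 + η n ^ 2))
          (Icc 0 l) := by
        refine ContinuousOn.div (by fun_prop) (by fun_prop) (fun t _ => ?_)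
        positivity
      rw [uIoc_of_le hl.le]
      exact (this.mono Ioc_subset_Icc_self).aestronglyMeasurable measurableSet_Ioc
    · filter_upwards with n
      filter_upwards with t _
      rw [Real.norm_of_nonneg (by positivity)]
      exact div_le_one_of_le₀ (by nlinarith [sq_nonneg ((q n).1 * x1 t + (q n).2 * y1 t)])
        (by positivity)
    · exact intervalIntegrable_const
    · filter_upwards [hev] with t ht hmt
      rw [uIoc_of_le hl.le] at hmt
      have hne : ω.1 * x1 t + ω.2 * y1 t ≠ 0 := fun h => ht ⟨⟨hmt.1.le, hmt.2⟩, h⟩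
      have h1 := (hη0.pow 2).div
        ((((hωx.mul_const (x1 t)).add (hωy.mul_const (y1 t))).pow 2).add (hη0.pow 2))
        (by simpa using hne)
      have h2 : (0:ℝ) ^ 2 / ((ω.1 * x1 t + ω.2 * y1 t) ^ 2 + 0 ^ 2) = 0 := by simp
      rw [h2] at h1
      exact h1
  have hbound : Tendsto (fun n => 2 * η n ^ 3 + (A + B) * l * η n ^ 2 + ∫ t in (0:ℝ)..l,
      η n ^ 2 / (((q n).1 * x1 t + (q n).2 * y1 t) ^ 2 + η n ^ 2)) atTop (nhds 0) := by
    have := (((hη0.pow 3).const_mul 2).add ((hη0.pow 2).const_mul ((A + B) * l))).add hI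
    simpa using this
  apply squeeze_zero_norm' _ hbound
  filter_upwards [hqn.eventually_gt_atTop 0] with n hn
  have hηp : 0 < η n := by simp only [hη]; positivity
  have hq1 : ‖q n‖ ≤ 1 := by simpa using hmem (ms n)
  have key := fd_key l hl (fun t => (q n).1 * x t + (q n).2 * y t)
    (fun t => (q n).1 * x1 t + (q n).2 * y1 t) (fun t => (q n).1 * x2 t + (q n).2 * y2 t)
    (A + B) ‖p (ms n)‖ (η n) hn hηp (by fun_prop) (by fun_prop) (by fun_prop)
    (fun t ht => (((dx t (Ioo_subset_Icc_self ht)).const_mul _).add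
      ((dy t (Ioo_subset_Icc_self ht)).const_mul _)).hasDerivAt (Icc_mem_nhds ht.1 ht.2))
    (fun t ht => (((dx1 t (Ioo_subset_Icc_self ht)).const_mul _).add
      ((dy1 t (Ioo_subset_Icc_self ht)).const_mul _)).hasDerivAt (Icc_mem_nhds ht.1 ht.2))
    (by
      intro t ht
      have a1 : |(q n).1| ≤ 1 := (norm_fst_le (q n)).trans hq1
      have a2 : |(q n).2| ≤ 1 := (norm_snd_le (q n)).trans hq1
      refine (abs_add_le _ _).trans (add_le_add ?_ ?_)
      · rw [abs_mul]
        exact (mul_le_of_le_one_left (abs_nonneg _) a1).trans (hA t ht)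
      · rw [abs_mul]
        exact (mul_le_of_le_one_left (abs_nonneg _) a2).trans (hB t ht))
    (by
      simp only [hη]
      have : Real.sqrt (Real.sqrt ‖p (ms n)‖) ^ 4 = ‖p (ms n)‖ := by
        rw [show (4 : ℕ) = 2 * 2 from rfl, pow_mul, Real.sq_sqrt (Real.sqrt_nonneg _),
          Real.sq_sqrt hn.le]
      rw [inv_pow, this, mul_inv_cancel₀ hn.ne'])
  refine le_trans (le_of_eq ?_) key
  congr 2
  funext t
  congr 4
  simp only [hq, Prod.smul_fst, Prod.smul_snd, smul_eq_mul]
  field_simp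
end

section
/- Let q₀ be the quadratic form of the operator with Fourier symbol λ₋(p) = |p|² - |A(p)| satisfying 0 ≤ λ₋(p) - κ ≤ c·|p - p₀|² for all p, and let ψ_a(p) = f̂_a(p - p₀) where f_a(x) = exp(-|x|^a/2). Then 0 ≤ ∫_{ℝ²}(λ₋(p) - κ)|f̂_a(p - p₀)|² dp ≤ (π/2)·c·a, hence this quantity tends to 0 as a → 0+. -/
open MeasureTheory Real Filter
open scoped RealInnerProductSpace

open scoped FourierTransform ENNReal

theorem plancherel_aux {V : Type*} [NormedAddCommGroup V] [InnerProductSpace ℝ V]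
    [FiniteDimensional ℝ V] [MeasurableSpace V] [BorelSpace V]
    (g : V → ℂ) (h1 : Integrable g) (h2 : MemLp g 2) :
    eLpNorm (𝓕 g) 2 = eLpNorm g 2 := by
  set G : Lp (α := V) ℂ 2 := h2.toLp g with hG
  have hcont : Continuous (𝓕 g) :=
    VectorFourier.fourierIntegral_continuous Real.continuous_fourierChar
      (by exact continuous_inner) h1
  have key : ∀ᵐ x : V ∂volume, (𝓕 G : Lp ℂ 2 (volume : Measure V)) x = 𝓕 g x := by
    apply ae_eq_of_integral_contDiff_smul_eq
    · exact (Lp.memLp _).locallyIntegrable (by norm_num)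
    · exact hcont.locallyIntegrable
    intro φ φs φc
    have hg₁ : HasCompactSupport (Complex.ofRealCLM ∘ φ) := φc.comp_left rfl
    have hg₂ : ContDiff ℝ (⊤ : ℕ∞) (Complex.ofRealCLM ∘ φ) := by fun_prop
    set ψ := hg₁.toSchwartzMap hg₂ with hψ
    have e1 := congrArg (fun T => T ψ) (Lp.fourier_toTemperedDistribution_eq G)
    simp only [TemperedDistribution.fourier_apply, Lp.toTemperedDistribution_apply] at e1
    have e2 : ∫ x, (𝓕 ψ) x • G x = ∫ x, (𝓕 ψ) x • g x := by
      apply integral_congr_ae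
      filter_upwards [h2.coeFn_toLp] with x hx
      rw [hG, hx]
    have e3 : ∫ x, (𝓕 ψ) x • g x = ∫ x, ψ x • 𝓕 g x := by
      have := VectorFourier.integral_fourierIntegral_smul_eq_flip (L := innerₗ V) (μ := volume)
        (ν := volume) Real.continuous_fourierChar continuous_inner ψ.integrable h1
      rw [flip_innerₗ] at this
      exact this
    have e4 : ∀ H : V → ℂ, ∫ x, φ x • H x = ∫ x, ψ x • H x := by
      intro H; simp [hψ]
    rw [e4, e4, ← e1, e2, e3]
  rw [← eLpNorm_congr_ae key, ← eLpNorm_congr_ae h2.coeFn_toLp]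
  have := Lp.norm_fourier_eq G
  rw [Lp.norm_def, Lp.norm_def] at this
  exact (ENNReal.toReal_eq_toReal_iff' (Lp.memLp _).2.ne (Lp.memLp _).2.ne).1 this

theorem plancherel_lint {V : Type*} [NormedAddCommGroup V] [InnerProductSpace ℝ V]
    [FiniteDimensional ℝ V] [MeasurableSpace V] [BorelSpace V]
    (g : V → ℂ) (h1 : Integrable g) (h2 : MemLp g 2) :
    ∫⁻ w, ‖𝓕 g w‖ₑ ^ 2 = ∫⁻ w, ‖g w‖ₑ ^ 2 := by
  have := plancherel_aux g h1 h2
  rw [eLpNorm_eq_lintegral_rpow_enorm_toReal (by norm_num) (by norm_num), eLpNorm_eq_lintegral_rpow_enorm_toReal (by norm_num) (by norm_num)] at this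
  have := ENNReal.rpow_left_injective (by norm_num) this
  simpa using this

abbrev E2 := EuclideanSpace ℝ (Fin 2)

theorem decay_bound (a b k ε : ℝ) (ha : 0 < a) (hb : 0 < b) (hε : 0 < ε) :
    ∃ C : ℝ, 0 ≤ C ∧ ∀ s, ε ≤ s → s ^ k * exp (-b * s ^ (a / 2)) ≤ C := by
  have ht : Tendsto (fun s : ℝ => s ^ k * exp (-b * s ^ (a / 2))) atTop (nhds 0) := by
    have h1 := (tendsto_rpow_mul_exp_neg_mul_atTop_nhds_zero (k / (a/2)) b hb).comp
      (tendsto_rpow_atTop (y := a / 2) (by positivity))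
    refine h1.congr' ?_
    filter_upwards [eventually_gt_atTop 0] with s hs
    simp only [Function.comp]
    rw [← rpow_mul hs.le]
    congr 2
    field_simp
  obtain ⟨M, hM⟩ := eventually_atTop.1 (ht.eventually (gt_mem_nhds (show (0:ℝ) < 1 by norm_num)))
  have hc : ContinuousOn (fun s : ℝ => s ^ k * exp (-b * s ^ (a / 2))) (Set.Icc ε M) := by
    apply ContinuousOn.mul
    · exact continuousOn_id.rpow_const fun x hx => Or.inl (by have := hx.1; simp; linarith)
    · apply ContinuousOn.rexp
      apply continuousOn_const.mul
      exact continuousOn_id.rpow_const fun x hx => Or.inl (by have := hx.1; simp; linarith)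
  obtain ⟨C, hC⟩ := (isCompact_Icc.image_of_continuousOn hc).bddAbove
  refine ⟨max C 1, by positivity, fun s hs => ?_⟩
  rcases le_total s M with h | h
  · exact (hC ⟨s, ⟨hs, h⟩, rfl⟩).trans (le_max_left _ _)
  · exact (hM s h).le.trans (le_max_right _ _)

theorem integrable_aux (a b k ε : ℝ) (ha : 0 < a) (hb : 0 < b) (hε : 0 < ε) :
    Integrable (fun x : E2 => (‖x‖ ^ 2 + ε) ^ k * exp (-b * (‖x‖ ^ 2 + ε) ^ (a / 2))) := by
  obtain ⟨C, hC0, hC⟩ := decay_bound a b (k + 2) (ε) ha hb hε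
  have h1 : Integrable (fun x : E2 => ((1 : ℝ) + ‖x‖ ^ 2) ^ (-(4:ℝ) / 2)) :=
    integrable_rpow_neg_one_add_norm_sq (by simp; norm_num)
  have hpos : ∀ x : E2, 0 < ‖x‖ ^ 2 + ε := fun x => by positivity
  have hcont : ∀ l : ℝ, Continuous fun x : E2 => (‖x‖ ^ 2 + ε) ^ l := fun l =>
    Continuous.rpow_const (by fun_prop) fun x => Or.inl (hpos x).ne'
  refine (h1.const_mul (C * (max 1 ε⁻¹) ^ 2)).mono' ?_ ?_
  · exact ((hcont k).mul (continuous_exp.comp (continuous_const.mul (hcont _)))).aestronglyMeasurable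
  refine Eventually.of_forall fun x => ?_
  have hs := hpos x
  have := hC (‖x‖ ^ 2 + ε) (by nlinarith [sq_nonneg ‖x‖])
  rw [norm_of_nonneg (by positivity)]
  rw [rpow_add hs] at this
  set s := ‖x‖ ^ 2 + ε with hsd
  set t := 1 + ‖x‖ ^ 2 with htd
  have ht : 0 < t := by positivity
  have e : t ^ (-(4:ℝ)/2) = (t ^ 2)⁻¹ := by
    rw [show (-(4:ℝ)/2) = -(2:ℕ) by norm_num, rpow_neg ht.le, rpow_natCast]
  rw [e]
  have hts : t ≤ max 1 ε⁻¹ * s := by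
    have h1 : 1 ≤ max 1 ε⁻¹ := le_max_left _ _
    have h2 : ε⁻¹ ≤ max 1 ε⁻¹ := le_max_right _ _
    have h3 : 1 ≤ max 1 ε⁻¹ * ε := by
      calc (1:ℝ) = ε⁻¹ * ε := by field_simp
        _ ≤ _ := by gcongr
    rw [hsd, htd]; nlinarith [sq_nonneg ‖x‖]
  rw [← div_eq_mul_inv, le_div_iff₀ (by positivity)]
  rw [show s ^ (2:ℝ) = s ^ 2 from rpow_natCast s 2] at this
  calc s ^ k * rexp (-b * s ^ (a / 2)) * t ^ 2 ≤ s ^ k * rexp (-b * s ^ (a / 2)) * (max 1 ε⁻¹ * s) ^ 2 := by gcongr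
    _ = (s ^ k * s ^ 2 * rexp (-b * s ^ (a / 2))) * max 1 ε⁻¹ ^ 2 := by ring
    _ ≤ _ := by gcongr

theorem radial_int (a ε : ℝ) (ha : 0 < a) (hε : 0 < ε) :
    ∫ x : E2, a ^ 2 / 4 * ((‖x‖ ^ 2 + ε) ^ (a - 1) * exp (-1 * (‖x‖ ^ 2 + ε) ^ (a / 2)))
     ≤ π / 2 * a := by
  rw [integral_fun_norm_addHaar volume (fun r => a ^ 2 / 4 * ((r ^ 2 + ε) ^ (a - 1) * exp (-1 * (r ^ 2 + ε) ^ (a / 2))))]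
  have hv : volume.real (Metric.ball (0:E2) 1) = π := by
    simp [Measure.real, EuclideanSpace.volume_ball_fin_two, pi_pos.le]
  rw [hv]
  simp only [finrank_euclideanSpace, Fintype.card_fin, smul_eq_mul, nsmul_eq_mul]
  have hderiv : ∀ r ∈ Set.Ici (0:ℝ), HasDerivAt (fun r : ℝ => -(a / 4) * (((r ^ 2 + ε) ^ (a / 2) + 1) * exp (-(r ^ 2 + ε) ^ (a / 2)))) (r ^ (2 - 1) * (a ^ 2 / 4 * ((r ^ 2 + ε) ^ (a - 1) * exp (-1 * (r ^ 2 + ε) ^ (a / 2))))) r := by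
    intro r _
    have hs : 0 < r ^ 2 + ε := by positivity
    have h0 : HasDerivAt (fun r : ℝ => r ^ 2 + ε) (2 * r) r := by
      simpa using (hasDerivAt_pow 2 r).add_const ε
    have h1 := h0.rpow_const (p := a / 2) (Or.inl hs.ne')
    have h2 := ((h1.add_const 1).mul h1.neg.exp).const_mul (-(a / 4))
    refine HasDerivAt.congr_deriv h2 ?_
    simp only [Pi.neg_apply]
    have : (r ^ 2 + ε) ^ (a - 1) = (r ^ 2 + ε) ^ (a / 2) * (r ^ 2 + ε) ^ (a / 2 - 1) := by
      rw [← rpow_add hs]; congr 1; ring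
    rw [this, neg_one_mul]
    ring
  have hlim : Tendsto (fun r : ℝ => -(a / 4) * (((r ^ 2 + ε) ^ (a / 2) + 1) * exp (-(r ^ 2 + ε) ^ (a / 2)))) atTop (nhds 0) := by
    have hu : Tendsto (fun r : ℝ => (r ^ 2 + ε) ^ (a / 2)) atTop atTop :=
      (tendsto_rpow_atTop (by positivity)).comp
        (tendsto_atTop_add_const_right _ _ (tendsto_pow_atTop two_ne_zero))
    have h1 : Tendsto (fun u : ℝ => -(a/4) * ((u + 1) * exp (-u))) atTop (nhds 0) := by
      have := ((tendsto_pow_mul_exp_neg_atTop_nhds_zero 1).add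
        (tendsto_pow_mul_exp_neg_atTop_nhds_zero 0)).const_mul (-(a/4))
      simpa [add_mul] using this
    exact h1.comp hu
  rw [integral_Ioi_of_hasDerivAt_of_nonneg' hderiv _ hlim]
  · have : (ε ^ (a/2) + 1) * exp (-ε ^ (a/2)) ≤ 1 := by
      rw [exp_neg, ← div_eq_mul_inv, div_le_one (exp_pos _)]
      exact add_one_le_exp _
    norm_num
    nlinarith [mul_le_mul_of_nonneg_left this (show 0 ≤ a * π by positivity)]
  · intro r hr
    have : 0 < r := hr
    positivity

noncomputable def fe (a ε : ℝ) (x : E2) : ℂ := ((exp (-(1/2) * (‖x‖ ^ 2 + ε) ^ (a / 2)) : ℝ) : ℂ)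

theorem fe_hasFDerivAt (a ε : ℝ) (hε : 0 < ε) (x : E2) :
    HasFDerivAt (fe a ε) (Complex.ofRealCLM.comp
      ((-(a / 2) * ((‖x‖ ^ 2 + ε) ^ (a / 2 - 1) * exp (-(1/2) * (‖x‖ ^ 2 + ε) ^ (a / 2)))) • innerSL ℝ x)) x := by
  have hs : 0 < ‖x‖ ^ 2 + ε := by positivity
  have h0 : HasFDerivAt (fun x : E2 => ‖x‖ ^ 2 + ε) (2 • innerSL ℝ x) x :=
    (hasStrictFDerivAt_norm_sq x).hasFDerivAt.add_const ε
  have h1 : HasDerivAt (fun s : ℝ => exp (-(1/2) * s ^ (a/2)))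
      (exp (-(1/2) * (‖x‖ ^ 2 + ε) ^ (a/2)) * (-(1/2) * (a / 2 * (‖x‖ ^ 2 + ε) ^ (a/2-1)))) (‖x‖ ^ 2 + ε) :=
    ((Real.hasDerivAt_rpow_const (Or.inl hs.ne')).const_mul _).exp
  have h2 := h1.comp_hasFDerivAt x h0
  have h3 := Complex.ofRealCLM.hasFDerivAt.comp x h2
  refine HasFDerivAt.congr_fderiv h3 ?_
  congr 1
  ext v
  simp
  ring

theorem fe_fderiv_apply (a ε : ℝ) (hε : 0 < ε) (x v : E2) :
    fderiv ℝ (fe a ε) x v = ((-(a / 2) * ((‖x‖ ^ 2 + ε) ^ (a / 2 - 1) * exp (-(1/2) * (‖x‖ ^ 2 + ε) ^ (a / 2))) * ⟪x, v⟫ : ℝ) : ℂ) := by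
  rw [(fe_hasFDerivAt a ε hε x).fderiv]
  simp

theorem cont_rpow (ε : ℝ) (hε : 0 < ε) (l : ℝ) : Continuous fun x : E2 => (‖x‖ ^ 2 + ε) ^ l :=
  Continuous.rpow_const (by fun_prop) fun x => Or.inl (by positivity)

theorem fe_cont_fderiv (a ε : ℝ) (hε : 0 < ε) : Continuous (fderiv ℝ (fe a ε)) := by
  have : fderiv ℝ (fe a ε) = fun x => _ := funext fun x => (fe_hasFDerivAt a ε hε x).fderiv
  rw [this]
  have h1 := cont_rpow ε hε (a / 2 - 1)
  have h2 := cont_rpow ε hε (a / 2)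
  fun_prop

theorem norm_le_aux (ε : ℝ) (hε : 0 < ε) (x : E2) : ‖x‖ ≤ (‖x‖ ^ 2 + ε) ^ (1/2 : ℝ) := by
  rw [← Real.sqrt_eq_rpow]
  exact Real.le_sqrt_of_sq_le (by linarith)

theorem fe_norm_fderiv (a ε : ℝ) (ha : 0 < a) (hε : 0 < ε) (x : E2) :
    ‖fderiv ℝ (fe a ε) x‖ ≤ (a / 2) * ((‖x‖ ^ 2 + ε) ^ ((a - 1) / 2) * exp (-(1/2) * (‖x‖ ^ 2 + ε) ^ (a / 2))) := by
  have hs : 0 < ‖x‖ ^ 2 + ε := by positivity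
  apply ContinuousLinearMap.opNorm_le_bound _ (by positivity)
  intro v
  rw [fe_fderiv_apply a ε hε, Complex.norm_real, norm_mul, norm_mul, norm_neg, norm_of_nonneg (show 0 ≤ a / 2 by positivity),
    norm_of_nonneg (show 0 ≤ (‖x‖ ^ 2 + ε) ^ (a / 2 - 1) * exp (-(1/2) * (‖x‖ ^ 2 + ε) ^ (a / 2)) by positivity)]
  have h1 : ‖⟪x, v⟫‖ ≤ (‖x‖ ^ 2 + ε) ^ (1/2 : ℝ) * ‖v‖ :=
    (norm_inner_le_norm x v).trans (by gcongr; exact norm_le_aux ε hε x)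
  have h2 : (‖x‖ ^ 2 + ε) ^ ((a - 1) / 2) = (‖x‖ ^ 2 + ε) ^ (a / 2 - 1) * (‖x‖ ^ 2 + ε) ^ (1/2 : ℝ) := by
    rw [← rpow_add hs]; congr 1; ring
  rw [h2]
  calc _ ≤ a / 2 * ((‖x‖ ^ 2 + ε) ^ (a / 2 - 1) * rexp (-(1 / 2) * (‖x‖ ^ 2 + ε) ^ (a / 2))) * ((‖x‖ ^ 2 + ε) ^ (1/2 : ℝ) * ‖v‖) := by gcongr
    _ = _ := by ring

theorem fe_integrable (a ε : ℝ) (ha : 0 < a) (hε : 0 < ε) : Integrable (fe a ε) := by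
  have := (integrable_aux a (1/2) 0 ε ha (by norm_num) hε).ofReal (𝕜 := ℂ)
  refine this.congr (Eventually.of_forall fun x => ?_)
  simp [fe]

theorem fe_integrable_fderiv (a ε : ℝ) (ha : 0 < a) (hε : 0 < ε) : Integrable (fderiv ℝ (fe a ε)) :=
  ((integrable_aux a (1/2) ((a-1)/2) ε ha (by norm_num) hε).const_mul (a/2)).mono'
    (fe_cont_fderiv a ε hε).aestronglyMeasurable
    (Eventually.of_forall fun x => fe_norm_fderiv a ε ha hε x)

theorem sq_aux (a ε : ℝ) (hε : 0 < ε) (x : E2) :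
    ((a / 2) * ((‖x‖ ^ 2 + ε) ^ ((a - 1) / 2) * exp (-(1/2) * (‖x‖ ^ 2 + ε) ^ (a / 2)))) ^ 2
      = a ^ 2 / 4 * ((‖x‖ ^ 2 + ε) ^ (a - 1) * exp (-1 * (‖x‖ ^ 2 + ε) ^ (a / 2))) := by
  have hs : 0 < ‖x‖ ^ 2 + ε := by positivity
  rw [mul_pow, mul_pow, ← rpow_natCast, ← rpow_natCast, ← rpow_natCast (exp _), ← rpow_mul hs.le, ← exp_mul, ← rpow_natCast]
  norm_num
  congr 1
  · ring
  · congr 2 <;> ring_nf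

theorem fe_memLp (a ε : ℝ) (ha : 0 < a) (hε : 0 < ε) (v : E2) :
    MemLp (fun x => fderiv ℝ (fe a ε) x v) 2 := by
  have hc : Continuous (fun x => fderiv ℝ (fe a ε) x v) := by
    have := fe_cont_fderiv a ε hε
    fun_prop
  rw [memLp_two_iff_integrable_sq_norm hc.aestronglyMeasurable]
  refine (((integrable_aux a 1 (a-1) ε ha (by norm_num) hε).const_mul (a^2/4)).mul_const (‖v‖^2)).mono'
    (hc.norm.pow 2).aestronglyMeasurable (Eventually.of_forall fun x => ?_)
  rw [norm_of_nonneg (by positivity), ← sq_aux a ε hε, ← mul_pow]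
  gcongr
  exact (ContinuousLinearMap.le_opNorm _ _).trans (by gcongr; exact fe_norm_fderiv a ε ha hε x)

theorem fourier_fe_comp (a ε : ℝ) (ha : 0 < a) (hε : 0 < ε) (w v : E2) :
    𝓕 (fun x => fderiv ℝ (fe a ε) x v) w = (2 * π * Complex.I) * ⟪w, v⟫ * 𝓕 (fe a ε) w := by
  rw [← Real.fourier_continuousLinearMap_apply (fe_integrable_fderiv a ε ha hε),
    Real.fourier_fderiv (fe_integrable a ε ha hε) (fun x => (fe_hasFDerivAt a ε hε x).differentiableAt)
    (fe_integrable_fderiv a ε ha hε)]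
  simp [mul_assoc]
  exact Or.inl rfl

theorem norm_sq_E2 (w : E2) : ‖w‖ ^ 2 = (∑ j : Fin 2, ⟪w, EuclideanSpace.single j (1:ℝ)⟫ ^ 2) := by
  rw [EuclideanSpace.norm_sq_eq]
  simp [EuclideanSpace.inner_single_right]

theorem fe_lint (a ε : ℝ) (ha : 0 < a) (hε : 0 < ε) :
    ∫⁻ w, ENNReal.ofReal ((2 * π * ‖w‖) ^ 2 * ‖𝓕 (fe a ε) w‖ ^ 2) ≤ ENNReal.ofReal (π / 2 * a) := by
  have hmeas : ∀ v : E2, Measurable fun x => ‖fderiv ℝ (fe a ε) x v‖ₑ ^ 2 := fun v => by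
    have := fe_cont_fderiv a ε hε
    have hc : Continuous (fun x => fderiv ℝ (fe a ε) x v) := by fun_prop
    exact (hc.measurable.enorm).pow_const 2
  have hF : Continuous (𝓕 (fe a ε)) :=
    VectorFourier.fourierIntegral_continuous Real.continuous_fourierChar
      (by exact continuous_inner) (fe_integrable a ε ha hε)
  calc ∫⁻ w, ENNReal.ofReal ((2 * π * ‖w‖) ^ 2 * ‖𝓕 (fe a ε) w‖ ^ 2)
      = ∫⁻ w, ∑ j : Fin 2, ‖𝓕 (fun x => fderiv ℝ (fe a ε) x (EuclideanSpace.single j (1:ℝ))) w‖ₑ ^ 2 := by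
        congr 1 with w
        simp_rw [← ofReal_norm, ← ENNReal.ofReal_pow (norm_nonneg _)]
        rw [← ENNReal.ofReal_sum_of_nonneg (fun _ _ => by positivity)]
        congr 1
        simp_rw [fourier_fe_comp a ε ha hε, norm_mul, mul_pow, ← Finset.sum_mul, ← Finset.mul_sum]
        rw [norm_sq_E2]
        simp [mul_pow, Complex.norm_real]
    _ = ∑ j : Fin 2, ∫⁻ w, ‖𝓕 (fun x => fderiv ℝ (fe a ε) x (EuclideanSpace.single j (1:ℝ))) w‖ₑ ^ 2 := by
        rw [lintegral_finsetSum]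
        intro j _
        simp_rw [fourier_fe_comp a ε ha hε]
        have : Continuous fun w : E2 => (2 * π * Complex.I) * ⟪w, EuclideanSpace.single j (1:ℝ)⟫ * 𝓕 (fe a ε) w := by
          fun_prop
        exact this.measurable.enorm.pow_const 2
    _ = ∑ j : Fin 2, ∫⁻ x, ‖fderiv ℝ (fe a ε) x (EuclideanSpace.single j (1:ℝ))‖ₑ ^ 2 := by
        congr 1 with j
        exact plancherel_lint _ ((fe_integrable_fderiv a ε ha hε).apply_continuousLinearMap _) (fe_memLp a ε ha hε _)
    _ = ∫⁻ x, ∑ j : Fin 2, ‖fderiv ℝ (fe a ε) x (EuclideanSpace.single j (1:ℝ))‖ₑ ^ 2 := by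
        rw [lintegral_finsetSum]
        intro j _
        exact hmeas _
    _ ≤ ∫⁻ x : E2, ENNReal.ofReal (a ^ 2 / 4 * ((‖x‖ ^ 2 + ε) ^ (a - 1) * exp (-1 * (‖x‖ ^ 2 + ε) ^ (a / 2)))) := by
        apply lintegral_mono
        intro x
        simp only
        simp_rw [← ofReal_norm, ← ENNReal.ofReal_pow (norm_nonneg _)]
        rw [← ENNReal.ofReal_sum_of_nonneg (fun _ _ => by positivity)]
        apply ENNReal.ofReal_le_ofReal
        simp_rw [fe_fderiv_apply a ε hε, Complex.norm_real, norm_mul, mul_pow, ← Finset.mul_sum, Real.norm_eq_abs, sq_abs]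
        rw [← norm_sq_E2, ← sq_aux a ε hε]
        have hs : 0 < ‖x‖ ^ 2 + ε := by positivity
        have h2 : (‖x‖ ^ 2 + ε) ^ ((a - 1) / 2) = (‖x‖ ^ 2 + ε) ^ (a / 2 - 1) * (‖x‖ ^ 2 + ε) ^ (1/2 : ℝ) := by
          rw [← rpow_add hs]; congr 1; ring
        rw [h2]
        calc _ = (a / 2 * ((‖x‖ ^ 2 + ε) ^ (a / 2 - 1) * ‖x‖ * rexp (-(1 / 2) * (‖x‖ ^ 2 + ε) ^ (a / 2)))) ^ 2 := by ring
          _ ≤ _ := by gcongr; exact norm_le_aux ε hε x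
    _ = ENNReal.ofReal (∫ x : E2, a ^ 2 / 4 * ((‖x‖ ^ 2 + ε) ^ (a - 1) * exp (-1 * (‖x‖ ^ 2 + ε) ^ (a / 2)))) := by
        rw [ofReal_integral_eq_lintegral_ofReal]
        · exact (integrable_aux a 1 (a-1) ε ha (by norm_num) hε).const_mul _
        · exact Eventually.of_forall fun x => by simp only [Pi.zero_apply]; positivity
    _ ≤ _ := ENNReal.ofReal_le_ofReal (radial_int a ε ha hε)

theorem fe_zero (a : ℝ) (x : E2) : fe a 0 x = ((exp (-‖x‖ ^ a / 2) : ℝ) : ℂ) := by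
  unfold fe
  rw [add_zero, ← rpow_natCast, ← rpow_mul (norm_nonneg _)]
  congr 2
  rw [show ((2:ℕ):ℝ) * (a / 2) = a by push_cast; ring]
  ring

theorem fe_zero_integrable (a : ℝ) (ha : 0 < a) : Integrable (fe a 0) := by
  have h : Integrable (fun x : E2 => (fun r : ℝ => exp (-(1/2) * r ^ a)) ‖x‖) := by
    rw [integrable_fun_norm_addHaar volume (f := fun r : ℝ => exp (-(1/2) * r ^ a))]
    refine (integrableOn_rpow_mul_exp_neg_mul_rpow (p := a) (s := 1) (b := 1/2) (by norm_num) ha (by norm_num)).congr_fun ?_ measurableSet_Ioi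
    intro r _
    simp
  have h2 := h.ofReal (𝕜 := ℂ)
  refine h2.congr (Eventually.of_forall fun x => ?_)
  simp only
  rw [fe_zero]
  have : -(1/2) * ‖x‖ ^ a = -‖x‖ ^ a / 2 := by ring
  rw [this]
  rfl

theorem fourier_tendsto (a : ℝ) (ha : 0 < a) (w : E2) :
    Tendsto (fun n : ℕ => 𝓕 (fe a (1 / ((n:ℝ) + 1))) w) atTop (nhds (𝓕 (fe a 0) w)) := by
  simp_rw [Real.fourier_eq]
  apply tendsto_integral_of_dominated_convergence (fun x => ‖fe a 0 x‖)
  · intro n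
    have := (Real.fourierIntegral_convergent_iff w).2 (fe_integrable a (1 / ((n:ℝ) + 1)) ha (by positivity))
    exact this.aestronglyMeasurable
  · exact (fe_zero_integrable a ha).norm
  · intro n
    refine Eventually.of_forall fun x => ?_
    rw [Circle.norm_smul]
    simp only [fe, Complex.norm_real, norm_of_nonneg (exp_pos _).le]
    apply exp_le_exp.2
    have : (‖x‖ ^ 2 + 0) ^ (a/2) ≤ (‖x‖ ^ 2 + 1 / ((n:ℝ) + 1)) ^ (a/2) := by
      apply rpow_le_rpow (by positivity) _ (by positivity)
      have : 0 < 1 / ((n:ℝ)+1) := by positivity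
      linarith
    linarith
  · refine Eventually.of_forall fun x => ?_
    apply Tendsto.const_smul
    have hc : Continuous fun ε : ℝ => fe a ε x := by
      unfold fe
      have : Continuous fun ε : ℝ => (‖x‖ ^ 2 + ε) ^ (a/2) :=
        Continuous.rpow_const (by fun_prop) fun _ => Or.inr (by positivity)
      fun_prop
    exact (hc.tendsto 0).comp tendsto_one_div_add_atTop_nhds_zero_nat

theorem f0_lint (a : ℝ) (ha : 0 < a) :
    ∫⁻ w, ENNReal.ofReal ((2 * π * ‖w‖) ^ 2 * ‖𝓕 (fe a 0) w‖ ^ 2) ≤ ENNReal.ofReal (π / 2 * a) := by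
  have hlim : ∀ w : E2, Tendsto (fun n : ℕ => ENNReal.ofReal ((2 * π * ‖w‖) ^ 2 * ‖𝓕 (fe a (1 / ((n:ℝ) + 1))) w‖ ^ 2)) atTop
      (nhds (ENNReal.ofReal ((2 * π * ‖w‖) ^ 2 * ‖𝓕 (fe a 0) w‖ ^ 2))) := fun w =>
    ENNReal.tendsto_ofReal (((fourier_tendsto a ha w).norm.pow 2).const_mul _)
  calc _ = ∫⁻ w, liminf (fun n : ℕ => ENNReal.ofReal ((2 * π * ‖w‖) ^ 2 * ‖𝓕 (fe a (1 / ((n:ℝ) + 1))) w‖ ^ 2)) atTop := by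
        congr 1 with w
        exact (hlim w).liminf_eq.symm
    _ ≤ liminf (fun n : ℕ => ∫⁻ w, ENNReal.ofReal ((2 * π * ‖w‖) ^ 2 * ‖𝓕 (fe a (1 / ((n:ℝ) + 1))) w‖ ^ 2)) atTop := by
        apply lintegral_liminf_le
        intro n
        have hF : Continuous (𝓕 (fe a (1 / ((n:ℝ) + 1)))) :=
          VectorFourier.fourierIntegral_continuous Real.continuous_fourierChar
            (by exact continuous_inner) (fe_integrable a _ ha (by positivity))
        have : Continuous fun w : E2 => (2 * π * ‖w‖) ^ 2 * ‖𝓕 (fe a (1 / ((n:ℝ) + 1))) w‖ ^ 2 := by fun_prop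
        exact this.measurable.ennreal_ofReal
    _ ≤ liminf (fun n : ℕ => ENNReal.ofReal (π / 2 * a)) atTop :=
        liminf_le_liminf (Eventually.of_forall fun n => fe_lint a _ ha (by positivity))
    _ = _ := by simp

theorem f0_int (a : ℝ) (ha : 0 < a) :
    Integrable (fun w : E2 => (2 * π * ‖w‖) ^ 2 * ‖𝓕 (fe a 0) w‖ ^ 2) ∧
    ∫ w : E2, (2 * π * ‖w‖) ^ 2 * ‖𝓕 (fe a 0) w‖ ^ 2 ≤ π / 2 * a := by
  have hF : Continuous (𝓕 (fe a 0)) :=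
    VectorFourier.fourierIntegral_continuous Real.continuous_fourierChar
      (by exact continuous_inner) (fe_zero_integrable a ha)
  have hc : Continuous fun w : E2 => (2 * π * ‖w‖) ^ 2 * ‖𝓕 (fe a 0) w‖ ^ 2 := by fun_prop
  have hn : 0 ≤ᵐ[volume] fun w : E2 => (2 * π * ‖w‖) ^ 2 * ‖𝓕 (fe a 0) w‖ ^ 2 :=
    Eventually.of_forall fun w => by simp only [Pi.zero_apply]; positivity
  have hl := f0_lint a ha
  refine ⟨⟨hc.aestronglyMeasurable, ?_⟩, ?_⟩
  · rw [hasFiniteIntegral_iff_ofReal hn]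
    exact hl.trans_lt ENNReal.ofReal_lt_top
  · rw [integral_eq_lintegral_of_nonneg_ae hn hc.aestronglyMeasurable]
    exact ENNReal.toReal_le_of_le_ofReal (by positivity) hl

theorem scaled (a : ℝ) (ha : 0 < a) (h : E2 → ℂ)
    (hh : ∀ p : E2, h p = (1 / (2 * π)) * ∫ x : E2,
        Complex.exp (-(Complex.I * (⟪p, x⟫ : ℝ))) * ((Real.exp (-‖x‖ ^ a / 2) : ℝ) : ℂ)) :
    Integrable (fun p : E2 => ‖p‖ ^ 2 * ‖h p‖ ^ 2) ∧
    ∫ p : E2, ‖p‖ ^ 2 * ‖h p‖ ^ 2 ≤ π / 2 * a := by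
  obtain ⟨h1, h2⟩ := f0_int a ha
  have hp : ∀ p : E2, h p = (1 / (2 * π)) * 𝓕 (fe a 0) ((2 * π)⁻¹ • p) := by
    intro p
    rw [hh, Real.fourier_eq']
    congr 2 with x
    rw [fe_zero, smul_eq_mul, inner_smul_right, real_inner_comm]
    congr 2
    have : (π : ℂ) ≠ 0 := by exact_mod_cast pi_ne_zero
    push_cast
    field_simp
  have e : (fun p : E2 => ‖p‖ ^ 2 * ‖h p‖ ^ 2) = fun p : E2 => (1 / (2 * π)) ^ 2 *
      (fun w : E2 => (2 * π * ‖w‖) ^ 2 * ‖𝓕 (fe a 0) w‖ ^ 2) ((2 * π)⁻¹ • p) := by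
    funext p
    simp only [hp, norm_mul, norm_smul]
    have : ‖(1 / (2 * π) : ℂ)‖ = 1 / (2 * π) := by simp [abs_of_pos pi_pos]
    rw [this, norm_of_nonneg (by positivity : 0 ≤ (2 * π)⁻¹)]
    field_simp
  rw [e]
  refine ⟨(h1.comp_smul (by positivity)).const_mul _, ?_⟩
  rw [integral_const_mul, Measure.integral_comp_smul volume (fun w : E2 => (2 * π * ‖w‖) ^ 2 * ‖𝓕 (fe a 0) w‖ ^ 2)]
  refine le_trans (le_of_eq ?_) h2
  simp only [finrank_euclideanSpace, Fintype.card_fin, smul_eq_mul]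
  rw [abs_of_pos (by positivity), ← mul_assoc]
  convert one_mul _ using 2
  field_simp

/-- With `0 ≤ λ₋(p) - κ ≤ c|p - p₀|²` and `f̂_a` the (unitary) Fourier transform of
`f_a(x) = exp(-|x|^a/2)`, one has `0 ≤ ∫ (λ₋(p)-κ)|f̂_a(p-p₀)|² dp ≤ (π/2)·c·a`,
which tends to `0` as `a → 0+`. -/
theorem form_estimate_tends_to_zero
    (lam : EuclideanSpace ℝ (Fin 2) → ℝ) (hmeas : Measurable lam)
    (κ c : ℝ) (hc : 0 < c) (p₀ : EuclideanSpace ℝ (Fin 2))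
    (hbound : ∀ p : EuclideanSpace ℝ (Fin 2),
      0 ≤ lam p - κ ∧ lam p - κ ≤ c * ‖p - p₀‖ ^ 2)
    (fhat : ℝ → EuclideanSpace ℝ (Fin 2) → ℂ)
    (hfhat : ∀ a : ℝ, ∀ p : EuclideanSpace ℝ (Fin 2), fhat a p =
      (1 / (2 * π)) * ∫ x : EuclideanSpace ℝ (Fin 2),
        Complex.exp (-(Complex.I * (⟪p, x⟫ : ℝ))) * ((Real.exp (-‖x‖ ^ a / 2) : ℝ) : ℂ)) :
    (∀ a : ℝ, 0 < a →
      0 ≤ (∫ p : EuclideanSpace ℝ (Fin 2), (lam p - κ) * ‖fhat a (p - p₀)‖ ^ 2) ∧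
      (∫ p : EuclideanSpace ℝ (Fin 2), (lam p - κ) * ‖fhat a (p - p₀)‖ ^ 2)
        ≤ (π / 2) * c * a) ∧
    Tendsto (fun a : ℝ => ∫ p : EuclideanSpace ℝ (Fin 2), (lam p - κ) * ‖fhat a (p - p₀)‖ ^ 2)
      (nhdsWithin 0 (Set.Ioi 0)) (nhds 0) := by
  have main : ∀ a : ℝ, 0 < a →
      0 ≤ (∫ p : EuclideanSpace ℝ (Fin 2), (lam p - κ) * ‖fhat a (p - p₀)‖ ^ 2) ∧
      (∫ p : EuclideanSpace ℝ (Fin 2), (lam p - κ) * ‖fhat a (p - p₀)‖ ^ 2)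
        ≤ (π / 2) * c * a := by
    intro a ha
    obtain ⟨h1, h2⟩ := scaled a ha (fhat a) (hfhat a)
    have hn : ∀ p, 0 ≤ (lam p - κ) * ‖fhat a (p - p₀)‖ ^ 2 := fun p =>
      mul_nonneg (hbound p).1 (by positivity)
    refine ⟨integral_nonneg hn, ?_⟩
    calc ∫ p, (lam p - κ) * ‖fhat a (p - p₀)‖ ^ 2
        ≤ ∫ p, c * (fun q => ‖q‖ ^ 2 * ‖fhat a q‖ ^ 2) (p - p₀) := by
          apply integral_mono_of_nonneg (Eventually.of_forall hn)
          · exact (h1.comp_sub_right p₀).const_mul c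
          · refine Eventually.of_forall fun p => ?_
            simp only
            rw [← mul_assoc]
            gcongr
            exact (hbound p).2
      _ = c * ∫ q, ‖q‖ ^ 2 * ‖fhat a q‖ ^ 2 := by
          rw [integral_const_mul, integral_sub_right_eq_self (fun q => ‖q‖ ^ 2 * ‖fhat a q‖ ^ 2)]
      _ ≤ c * (π / 2 * a) := by gcongr
      _ = _ := by ring
  refine ⟨main, ?_⟩
  have hlim : Tendsto (fun a : ℝ => (π / 2) * c * a) (nhdsWithin 0 (Set.Ioi 0)) (nhds 0) := by
    have : Continuous fun a : ℝ => (π / 2) * c * a := by fun_prop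
    exact (this.tendsto' 0 0 (by simp)).mono_left nhdsWithin_le_nhds
  refine tendsto_of_tendsto_of_tendsto_of_le_of_le' tendsto_const_nhds hlim ?_ ?_
  · filter_upwards [self_mem_nhdsWithin] with a ha using (main a ha).1
  · filter_upwards [self_mem_nhdsWithin] with a ha using (main a ha).2
end
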